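/- arXiv:2509.11805 — 2 statements merged into one kernel-verified Lean document; each statement's English description precedes it below -/
import Mathlib

section
/- There exist effectively computable constants C' > 0 and N > 0 such that for all integers n > N and all integers l with 0 ≤ l ≤ n/(10·log n), one has |a(n,l) − (l+1)^{l+n−1}/(l+1)!| ≤ (C'/n²)·(l+1)^{l+n−1}/(l+1)!. In particular, a(n,l) = ((l+1)^{l+n−1}/(l+1)!)·exp(O(1/n²)) in this range. -/
/-!
The term `k = l` of the sum defining `a n l` is exactly `(l+1)^(l+n-1)/(l+1)!`, so the error is the
sum of the terms with `k = l - r`, `1 ≤ r ≤ l`. Crude estimates suffice for these.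

* `|C(n,k,i)| ≤ (n³)^i` (`abs_Cnki_le`). There are at most `r^m` tuples of length `m`, and
  `∑ r^m/m! ≤ e^r ≤ n^r`, so the inner sum is at most `(n⁴)^r` (`abs_inner_le`).
* The ratio of the prefactors is at most
  `((k+1)/(l+1))^(n-1) = (1 - r/(l+1))^(n-1) ≤ exp(-r(n-1)/(l+1)) ≤ n^(-7r)` because
  `l ≤ n/(10 log n)` gives `(n-1)/(l+1) ≥ 7 log n` (`prefactor_le`).

Each error term is therefore at most `n^(-3r) ≤ n^(-3)` times the main term, and there are
`l ≤ n` of them, which gives the theorem with `C' = 1`.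
-/

open Finset Real

/-- The constant `C(n,k,i)` from Aluffi–Marcolli–Nascimento. -/
noncomputable def Cnki (n k i : ℕ) : ℝ :=
  ((-1 : ℝ) ^ i * (2 * (k : ℝ) * i + n * i + k + n - 1) + (k : ℝ) - i) / (i * (i + 1))
    - (1 / ((i : ℝ) * (k + 1) ^ i)) * ∑ j ∈ Finset.range (k + n - 1), (j : ℝ) ^ i

/-- The finite set of `m`-tuples of positive integers summing to `N`. -/
def posTuples (m N : ℕ) : Finset (Fin m → ℕ) :=
  (Fintype.piFinset fun _ => Finset.Icc 1 N).filter fun f => ∑ j, f j = N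

/-- `a n l = rk H^{2l}(M̄_{0,n})`, via the Aluffi–Marcolli–Nascimento formula. -/
noncomputable def a (n l : ℕ) : ℝ :=
  ∑ k ∈ Finset.range (l + 1),
    ((k + 1 : ℝ) ^ (k + n - 1) / (Nat.factorial (k + 1) : ℝ)) *
      ∑ m ∈ Finset.range (l - k + 1),
        (1 / (Nat.factorial m : ℝ)) *
          ∑ f ∈ posTuples m (l - k), ∏ j, Cnki n k (f j)

lemma abs_Cnki_le {n k i : ℕ} (hn : 5 ≤ n) (hk : k ≤ n) (hi : 1 ≤ i) :
    |Cnki n k i| ≤ ((n : ℝ) ^ 3) ^ i := by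
  have hn' : (5 : ℝ) ≤ n := by exact_mod_cast hn
  have hk' : (k : ℝ) ≤ n := by exact_mod_cast hk
  have hk0 : (0 : ℝ) ≤ k := by positivity
  have hi' : (1 : ℝ) ≤ i := by exact_mod_cast hi
  have h1 : |((-1 : ℝ) ^ i * (2 * (k : ℝ) * i + n * i + k + n - 1) + (k : ℝ) - i) / (i * (i + 1))|
      ≤ 4 * n := by
    rw [abs_div, abs_of_pos (by positivity : (0 : ℝ) < i * (i + 1)), div_le_iff₀ (by positivity)]
    have hb : (0 : ℝ) ≤ 2 * (k : ℝ) * i + n * i + k + n - 1 := by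
      have : (0 : ℝ) ≤ 2 * (k : ℝ) * i + n * i + k := by positivity
      linarith
    have hp : |(-1 : ℝ) ^ i * (2 * (k : ℝ) * i + n * i + k + n - 1)|
        = 2 * (k : ℝ) * i + n * i + k + n - 1 := by
      rw [abs_mul, abs_pow, abs_neg, abs_one, one_pow, one_mul, abs_of_nonneg hb]
    have hki : (k : ℝ) * i ≤ n * i := by gcongr
    have hni : (i : ℝ) ≤ n * i := by nlinarith
    have hnii : (n : ℝ) * i ≤ n * i * i := le_mul_of_one_le_right (by positivity) hi'
    have hnn : (n : ℝ) ≤ n * i := le_mul_of_one_le_right (by positivity) hi'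
    have ht := abs_sub ((-1 : ℝ) ^ i * (2 * (k : ℝ) * i + n * i + k + n - 1) + (k : ℝ)) (i : ℝ)
    have ht2 := abs_add_le ((-1 : ℝ) ^ i * (2 * (k : ℝ) * i + n * i + k + n - 1)) (k : ℝ)
    rw [hp, abs_of_nonneg hk0] at ht2
    rw [abs_of_nonneg (by positivity : (0 : ℝ) ≤ (i : ℝ))] at ht
    nlinarith
  have h2 : |(1 / ((i : ℝ) * (k + 1) ^ i)) * ∑ j ∈ Finset.range (k + n - 1), (j : ℝ) ^ i|
      ≤ (2 * (n : ℝ)) ^ (i + 1) := by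
    rw [abs_of_nonneg (by positivity)]
    have hs : ∑ j ∈ Finset.range (k + n - 1), (j : ℝ) ^ i ≤ (2 * (n : ℝ)) ^ (i + 1) := by
      have hc := Finset.sum_le_card_nsmul (Finset.range (k + n - 1)) (fun j : ℕ => (j : ℝ) ^ i)
        ((2 * (n : ℝ)) ^ i) (fun j hj => by
          have : j ≤ 2 * n := by have := Finset.mem_range.1 hj; omega
          have : (j : ℝ) ≤ 2 * n := by exact_mod_cast this
          gcongr)
      rw [Finset.card_range, nsmul_eq_mul] at hc
      have hcard : ((k + n - 1 : ℕ) : ℝ) ≤ 2 * n := by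
        have : k + n - 1 ≤ 2 * n := by omega
        exact_mod_cast this
      calc _ ≤ _ := hc
        _ ≤ 2 * (n : ℝ) * (2 * n) ^ i := by gcongr
        _ = _ := by ring
    have hd : 1 / ((i : ℝ) * (k + 1) ^ i) ≤ 1 := by
      rw [div_le_one (by positivity)]
      exact one_le_mul_of_one_le_of_one_le hi' (one_le_pow₀ (by linarith))
    calc _ ≤ 1 * ∑ j ∈ Finset.range (k + n - 1), (j : ℝ) ^ i := by gcongr
      _ ≤ _ := by rw [one_mul]; exact hs
  have h3 : (2 * (n : ℝ)) ^ (i + 1) ≤ (4 * (n : ℝ) ^ 2) ^ i := by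
    calc (2 * (n : ℝ)) ^ (i + 1) ≤ (2 * (n : ℝ)) ^ (2 * i) :=
          pow_le_pow_right₀ (by linarith) (by omega)
      _ = _ := by rw [pow_mul]; ring
  have h4 : 4 * (n : ℝ) ≤ (4 * (n : ℝ)) ^ i := le_self_pow₀ (by linarith) (by omega)
  have h5 : (4 * (n : ℝ)) ^ i + (4 * (n : ℝ) ^ 2) ^ i ≤ (4 * (n : ℝ) + 4 * (n : ℝ) ^ 2) ^ i :=
    pow_add_pow_le (by positivity) (by positivity) (by omega)
  have h6 : (4 * (n : ℝ) + 4 * (n : ℝ) ^ 2) ^ i ≤ ((n : ℝ) ^ 3) ^ i := by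
    gcongr
    nlinarith [mul_nonneg (by positivity : (0 : ℝ) ≤ n) (sub_nonneg.2 hn'),
      mul_nonneg (by positivity : (0 : ℝ) ≤ (n : ℝ) ^ 2) (sub_nonneg.2 hn')]
  unfold Cnki
  refine (abs_sub _ _).trans ?_
  linarith

/-- The left-hand side is the coefficient of `x^r` in `exp (∑ C(n,k,i) x^i)`. -/
lemma abs_inner_le {n k r : ℕ} (hn : 5 ≤ n) (hk : k ≤ n) :
    |∑ m ∈ Finset.range (r + 1), (1 / (Nat.factorial m : ℝ)) *
          ∑ f ∈ posTuples m r, ∏ j, Cnki n k (f j)| ≤ ((n : ℝ) ^ 4) ^ r := by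
  have hn' : (5 : ℝ) ≤ n := by exact_mod_cast hn
  have hsum : ∀ m : ℕ, |∑ f ∈ posTuples m r, ∏ j, Cnki n k (f j)|
      ≤ (r : ℝ) ^ m * ((n : ℝ) ^ 3) ^ r := by
    intro m
    have hterm : ∀ f ∈ posTuples m r, |∏ j, Cnki n k (f j)| ≤ ((n : ℝ) ^ 3) ^ r := by
      intro f hf
      simp only [posTuples, Finset.mem_filter, Fintype.mem_piFinset, Finset.mem_Icc] at hf
      rw [Finset.abs_prod, ← hf.2, ← Finset.prod_pow_eq_pow_sum]
      exact Finset.prod_le_prod (fun _ _ => abs_nonneg _)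
        (fun j _ => abs_Cnki_le hn hk (hf.1 j).1)
    have hcard : (posTuples m r).card ≤ r ^ m := by
      refine (Finset.card_filter_le _ _).trans ?_
      simp
    calc _ ≤ ∑ f ∈ posTuples m r, |∏ j, Cnki n k (f j)| := Finset.abs_sum_le_sum_abs _ _
      _ ≤ (posTuples m r).card • ((n : ℝ) ^ 3) ^ r := Finset.sum_le_card_nsmul _ _ _ hterm
      _ = ((posTuples m r).card : ℝ) * ((n : ℝ) ^ 3) ^ r := nsmul_eq_mul _ _
      _ ≤ _ := by
        gcongr
        exact_mod_cast hcard
  have hexp : Real.exp r ≤ (n : ℝ) ^ r := by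
    rw [← Real.exp_one_pow]
    gcongr
    linarith [Real.exp_one_lt_d9]
  calc _ ≤ ∑ m ∈ Finset.range (r + 1), |(1 / (Nat.factorial m : ℝ)) *
          ∑ f ∈ posTuples m r, ∏ j, Cnki n k (f j)| := Finset.abs_sum_le_sum_abs _ _
    _ ≤ ∑ m ∈ Finset.range (r + 1), ((r : ℝ) ^ m / (Nat.factorial m : ℝ)) * ((n : ℝ) ^ 3) ^ r := by
      gcongr with m _
      rw [abs_mul, abs_of_nonneg (by positivity : (0 : ℝ) ≤ 1 / (Nat.factorial m : ℝ))]
      calc _ ≤ 1 / (Nat.factorial m : ℝ) * ((r : ℝ) ^ m * ((n : ℝ) ^ 3) ^ r) := by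
            gcongr
            exact hsum m
        _ = _ := by ring
    _ ≤ Real.exp r * ((n : ℝ) ^ 3) ^ r := by
      rw [← Finset.sum_mul]
      gcongr
      exact Real.sum_le_exp_of_nonneg (by positivity) _
    _ ≤ (n : ℝ) ^ r * ((n : ℝ) ^ 3) ^ r := by gcongr
    _ = _ := by rw [← mul_pow]; ring_nf

/-- The exponential decay `((k+1)/(l+1))^(n-1) ≤ n^(-7r)`, with `l = k + r` and denominators
cleared. -/
lemma base_pow_le {n k r : ℕ} (hn : 1 ≤ n)
    (h : 7 * Real.log n * ((k + r : ℕ) + 1) ≤ (n : ℝ) - 1) :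
    ((k : ℝ) + 1) ^ (n - 1) * ((n : ℝ) ^ 7) ^ r ≤ (((k + r : ℕ) : ℝ) + 1) ^ (n - 1) := by
  set L : ℝ := ((k + r : ℕ) : ℝ) + 1 with hL
  have hLpos : 0 < L := by positivity
  have hn0 : (0 : ℝ) < n := by exact_mod_cast hn
  have hx : (k : ℝ) + 1 ≤ L * Real.exp (-(r / L)) := by
    have h1 := Real.one_sub_le_exp_neg ((r : ℝ) / L)
    have h2 : (k : ℝ) + 1 = L * (1 - r / L) := by
      field_simp
      rw [hL]; push_cast; ring
    rw [h2]; gcongr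
  have hexp : Real.exp (-(r / L)) ^ (n - 1) * ((n : ℝ) ^ 7) ^ r ≤ 1 := by
    have hnl : ((n : ℝ) ^ 7) ^ r = Real.exp (7 * Real.log n * r) := by
      rw [← pow_mul, ← Real.exp_log hn0, ← Real.exp_nat_mul, Real.log_exp]
      push_cast; ring_nf
    rw [hnl, ← Real.exp_nat_mul, ← Real.exp_add, Real.exp_le_one_iff, Nat.cast_sub hn]
    have h3 : 7 * Real.log n ≤ ((n : ℝ) - 1) / L := by rwa [le_div_iff₀ hLpos]
    have h4 : 7 * Real.log n * r ≤ ((n : ℝ) - 1) / L * r := by gcongr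
    have h5 : ((n : ℝ) - ((1 : ℕ) : ℝ)) * -(r / L) = -(((n : ℝ) - 1) / L * r) := by
      push_cast; ring
    linarith
  calc _ ≤ (L * Real.exp (-(r / L))) ^ (n - 1) * ((n : ℝ) ^ 7) ^ r := by gcongr
    _ = L ^ (n - 1) * (Real.exp (-(r / L)) ^ (n - 1) * ((n : ℝ) ^ 7) ^ r) := by
      rw [mul_pow]; ring
    _ ≤ L ^ (n - 1) * 1 := by gcongr
    _ = _ := mul_one _

/-- Besides `base_pow_le`, this uses `(l+1)! ≤ (k+1)! (l+1)^r` and `(k+1)^k ≤ (l+1)^k` for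
`l = k + r`, so that the factorials and the extra powers cancel. -/
lemma prefactor_le {n k r : ℕ} (hn : 1 ≤ n)
    (h : 7 * Real.log n * ((k + r : ℕ) + 1) ≤ (n : ℝ) - 1) :
    ((k : ℝ) + 1) ^ (k + n - 1) / (Nat.factorial (k + 1) : ℝ) * ((n : ℝ) ^ 7) ^ r ≤
      (((k + r : ℕ) : ℝ) + 1) ^ (k + r + n - 1) / (Nat.factorial (k + r + 1) : ℝ) := by
  have hbase := base_pow_le hn h
  set L : ℝ := ((k + r : ℕ) : ℝ) + 1 with hL
  have hLpos : 0 < L := by positivity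
  have hfac : (Nat.factorial (k + r + 1) : ℝ) ≤ Nat.factorial (k + 1) * L ^ r := by
    have h1 := Nat.factorial_mul_ascFactorial (k + 1) r
    have h2 := Nat.ascFactorial_le_pow_add (k + 1) r
    have h3 : Nat.factorial (k + r + 1) ≤ Nat.factorial (k + 1) * (k + r + 1) ^ r := by
      rw [show k + r + 1 = k + 1 + r by ring, ← h1]
      exact Nat.mul_le_mul_left _ h2
    rw [hL]
    exact_mod_cast h3
  have hkL : (k : ℝ) + 1 ≤ L := by
    rw [hL]; push_cast
    linarith [(by positivity : (0 : ℝ) ≤ r)]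
  rw [div_mul_eq_mul_div, div_le_div_iff₀ (by positivity) (by positivity),
    show k + n - 1 = k + (n - 1) by omega, show k + r + n - 1 = k + r + (n - 1) by omega]
  calc ((k : ℝ) + 1) ^ (k + (n - 1)) * ((n : ℝ) ^ 7) ^ r * (Nat.factorial (k + r + 1) : ℝ)
      = ((k : ℝ) + 1) ^ k * (((k : ℝ) + 1) ^ (n - 1) * ((n : ℝ) ^ 7) ^ r)
          * (Nat.factorial (k + r + 1) : ℝ) := by rw [pow_add]; ring
    _ ≤ L ^ k * L ^ (n - 1) * (Nat.factorial (k + 1) * L ^ r) := by gcongr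
    _ = _ := by rw [pow_add, pow_add]; ring

/-- **Theorem (refined asymptotic with explicit error bound).** There are effectively
computable constants `C' > 0` and `N > 0` such that for all integers `n > N` and
`0 ≤ l ≤ n / (10 log n)`,
`|a(n,l) − (l+1)^{l+n−1}/(l+1)!| ≤ (C'/n²) · (l+1)^{l+n−1}/(l+1)!`. -/
theorem stmt1 :
    ∃ C' : ℝ, 0 < C' ∧ ∃ N : ℕ, 0 < N ∧ ∀ n l : ℕ, N < n →
      (l : ℝ) ≤ (n : ℝ) / (10 * Real.log n) →
      |a n l - (l + 1 : ℝ) ^ (l + n - 1) / (Nat.factorial (l + 1) : ℝ)| ≤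
        (C' / (n : ℝ) ^ 2) *
          ((l + 1 : ℝ) ^ (l + n - 1) / (Nat.factorial (l + 1) : ℝ)) := by
  refine ⟨1, one_pos, 10000, by norm_num, ?_⟩
  intro n l hn hl
  have hn' : (10000 : ℝ) < n := by exact_mod_cast hn
  have hn0 : (0 : ℝ) < n := by linarith
  have hlog1 : 1 ≤ Real.log n := by
    rw [Real.le_log_iff_exp_le hn0]
    linarith [Real.exp_one_lt_d9]
  have hlogn : Real.log n ≤ n / 100 + 98 := by
    have h1 := Real.log_le_sub_one_of_pos (show (0 : ℝ) < n / 100 by positivity)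
    have h2 := Real.log_le_sub_one_of_pos (show (0 : ℝ) < 100 by norm_num)
    rw [Real.log_div hn0.ne' (by norm_num)] at h1
    linarith
  have hll : (l : ℝ) * (10 * Real.log n) ≤ n := by
    rwa [le_div_iff₀ (by positivity)] at hl
  -- `7 log n * l ≤ 7n/10`, and the threshold `10000` makes `7 log n + 1 ≤ 3n/10`.
  have hkey : 7 * Real.log n * ((l : ℝ) + 1) ≤ (n : ℝ) - 1 := by nlinarith
  have hln : (l : ℝ) ≤ n := by
    have : (0 : ℝ) ≤ l := by positivity
    nlinarith
  have hlnN : l ≤ n := by exact_mod_cast hln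
  set M : ℝ := (l + 1 : ℝ) ^ (l + n - 1) / (Nat.factorial (l + 1) : ℝ) with hM
  have hM0 : 0 ≤ M := by positivity
  have hsplit : a n l - M = ∑ k ∈ Finset.range l,
    ((k + 1 : ℝ) ^ (k + n - 1) / (Nat.factorial (k + 1) : ℝ)) *
      ∑ m ∈ Finset.range (l - k + 1),
        (1 / (Nat.factorial m : ℝ)) *
          ∑ f ∈ posTuples m (l - k), ∏ j, Cnki n k (f j) := by
    unfold a
    -- For `k = l` only the empty tuple contributes, with value `1`.
    rw [Finset.sum_range_succ, hM]
    simp [posTuples]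
  have hterm : ∀ k ∈ Finset.range l,
      |((k + 1 : ℝ) ^ (k + n - 1) / (Nat.factorial (k + 1) : ℝ)) *
        ∑ m ∈ Finset.range (l - k + 1), (1 / (Nat.factorial m : ℝ)) *
          ∑ f ∈ posTuples m (l - k), ∏ j, Cnki n k (f j)| ≤ M / (n : ℝ) ^ 3 := by
    intro k hk
    obtain ⟨r, rfl⟩ := Nat.exists_eq_add_of_le (Finset.mem_range.1 hk).le
    have hr : 1 ≤ r := by have := Finset.mem_range.1 hk; omega
    rw [Nat.add_sub_cancel_left, abs_mul,
      abs_of_nonneg (by positivity :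
        (0 : ℝ) ≤ (k + 1 : ℝ) ^ (k + n - 1) / (Nat.factorial (k + 1) : ℝ)),
      le_div_iff₀ (by positivity)]
    have h1 := abs_inner_le (n := n) (k := k) (r := r) (by omega) (by omega)
    have h2 := prefactor_le (n := n) (k := k) (r := r) (by omega) hkey
    have h3 : (n : ℝ) ^ 3 ≤ ((n : ℝ) ^ 3) ^ r :=
      le_self_pow₀ (one_le_pow₀ (by linarith)) (by omega)
    refine le_trans ?_ h2
    calc _ ≤ (k + 1 : ℝ) ^ (k + n - 1) / (Nat.factorial (k + 1) : ℝ) * ((n : ℝ) ^ 4) ^ r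
          * ((n : ℝ) ^ 3) ^ r := by gcongr
      _ = _ := by rw [mul_assoc, ← mul_pow]; ring_nf
  rw [hsplit]
  calc _ ≤ _ := Finset.abs_sum_le_sum_abs _ _
    _ ≤ (Finset.range l).card • (M / (n : ℝ) ^ 3) := Finset.sum_le_card_nsmul _ _ _ hterm
    _ = l * (M / (n : ℝ) ^ 3) := by rw [Finset.card_range, nsmul_eq_mul]
    _ ≤ n * (M / (n : ℝ) ^ 3) := by gcongr
    _ = _ := by field_simp
end

section
/- For every fixed integer l ≥ 0, the quantity a(n,l)·(l+1)!/(l+1)^{l+n−1} tends to 1 as n → ∞; that is, a(n,l) is asymptotic to (l+1)^{l+n−1}/(l+1)! as n → ∞. -/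
/-!
For fixed `k` and `i`, `C(n,k,i)` grows at most polynomially in `n`, hence so does the coefficient
of `(k+1)^{k+n-1}/(k+1)!` in `a(n,l)`, a fixed finite sum of products of such constants. After
division by `(l+1)^{l+n-1}/(l+1)!` the term of index `k < l` is therefore a function of moderate
growth times `((k+1)/(l+1))^n`, and tends to `0`; the term `k = l` has coefficient `1`, and
contributes exactly `1`.

Growth is handled through the predicate `SubExp` ("killed by every decaying geometric
sequence"), which holds for `n ↦ n` and is closed under finite sums and products.
-/

open Finset Real

/-- `f` grows subexponentially: `f n * r ^ n → 0` for every `r ∈ [0, 1)`. -/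
def SubExp (f : ℕ → ℝ) : Prop :=
  ∀ r : ℝ, 0 ≤ r → r < 1 → Filter.Tendsto (fun n => f n * r ^ n) Filter.atTop (nhds 0)

namespace SubExp

theorem const (c : ℝ) : SubExp (fun _ => c) := fun r h0 h1 => by
  simpa using (tendsto_pow_atTop_nhds_zero_of_lt_one h0 h1).const_mul c

theorem natCast : SubExp (fun n => (n : ℝ)) := fun _ h0 h1 =>
  tendsto_self_mul_const_pow_of_lt_one h0 h1

theorem add {f g : ℕ → ℝ} (hf : SubExp f) (hg : SubExp g) : SubExp (fun n => f n + g n) :=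
  fun r h0 h1 => by simpa [add_mul] using (hf r h0 h1).add (hg r h0 h1)

/-- Splitting `r ^ n` as `√r ^ n * √r ^ n` lets each factor absorb one half of the decay. -/
theorem mul {f g : ℕ → ℝ} (hf : SubExp f) (hg : SubExp g) : SubExp (fun n => f n * g n) := by
  intro r h0 h1
  have hs : √r < 1 := by rw [Real.sqrt_lt' one_pos]; simpa using h1
  have h := (hf _ (Real.sqrt_nonneg r) hs).mul (hg _ (Real.sqrt_nonneg r) hs)
  rw [mul_zero] at h
  refine h.congr fun n => ?_
  have : r ^ n = √r ^ n * √r ^ n := by rw [← mul_pow, Real.mul_self_sqrt h0]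
  rw [this]; ring

theorem sub {f g : ℕ → ℝ} (hf : SubExp f) (hg : SubExp g) : SubExp (fun n => f n - g n) := by
  simpa [sub_eq_add_neg] using hf.add ((const (-1)).mul hg)

theorem pow {f : ℕ → ℝ} (hf : SubExp f) (p : ℕ) : SubExp (fun n => f n ^ p) := by
  induction p with
  | zero => simpa using const 1
  | succ p ih => simpa [pow_succ] using ih.mul hf

theorem sum {ι : Type*} (s : Finset ι) {f : ℕ → ι → ℝ} (hf : ∀ i ∈ s, SubExp (fun n => f n i)) :
    SubExp (fun n => ∑ i ∈ s, f n i) := by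
  intro r h0 h1
  simp only [Finset.sum_mul]
  simpa using tendsto_finsetSum s fun i hi => hf i hi r h0 h1

theorem prod {ι : Type*} (s : Finset ι) {f : ℕ → ι → ℝ} (hf : ∀ i ∈ s, SubExp (fun n => f n i)) :
    SubExp (fun n => ∏ i ∈ s, f n i) := by
  classical
  induction s using Finset.induction_on with
  | empty => simpa using const 1
  | insert i s hi ih =>
    simp only [Finset.prod_insert hi]
    exact (hf i (Finset.mem_insert_self i s)).mul
      (ih fun j hj => hf j (Finset.mem_insert_of_mem hj))

theorem of_le {f g : ℕ → ℝ} (hg : SubExp g) (h0 : ∀ n, 0 ≤ f n) (h : ∀ n, f n ≤ g n) :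
    SubExp f := fun r hr0 hr1 =>
  squeeze_zero (fun n => mul_nonneg (h0 n) (pow_nonneg hr0 n))
    (fun n => mul_le_mul_of_nonneg_right (h n) (pow_nonneg hr0 n)) (hg r hr0 hr1)

end SubExp

theorem subExp_powerSum (k i : ℕ) :
    SubExp (fun n => ∑ j ∈ Finset.range (k + n - 1), (j : ℝ) ^ i) := by
  -- There are at most `k + n` summands, each at most `(k + n) ^ i`.
  refine SubExp.of_le (((SubExp.const (k : ℝ)).add SubExp.natCast).pow (i + 1))
    (fun n => Finset.sum_nonneg fun j _ => by positivity) fun n => ?_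
  calc ∑ j ∈ Finset.range (k + n - 1), (j : ℝ) ^ i
      ≤ ∑ _j ∈ Finset.range (k + n - 1), ((k : ℝ) + n) ^ i := by
        refine Finset.sum_le_sum fun j hj => ?_
        have hj' : j ≤ k + n := by have := Finset.mem_range.1 hj; omega
        gcongr
        exact_mod_cast hj'
    _ = ((k + n - 1 : ℕ) : ℝ) * ((k : ℝ) + n) ^ i := by simp
    _ ≤ ((k : ℝ) + n) * ((k : ℝ) + n) ^ i := by
        gcongr
        exact_mod_cast Nat.sub_le (k + n) 1
    _ = ((k : ℝ) + n) ^ (i + 1) := by ring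

theorem subExp_Cnki (k i : ℕ) : SubExp (fun n => Cnki n k i) := by
  have hN := SubExp.natCast
  have h1 : SubExp (fun n : ℕ =>
      (-1 : ℝ) ^ i * (2 * (k : ℝ) * i + n * i + k + n - 1) + (k : ℝ) - i) :=
    (((SubExp.const _).mul (((((SubExp.const _).add (hN.mul (SubExp.const _))).add
      (SubExp.const _)).add hN).sub (SubExp.const _))).add (SubExp.const _)).sub (SubExp.const _)
  unfold Cnki
  simp only [div_eq_mul_inv _ ((i : ℝ) * (i + 1))]
  exact (h1.mul (SubExp.const _)).sub ((SubExp.const _).mul (subExp_powerSum k i))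

/-- The contribution of an index `k < l` is negligible against the main term. -/
theorem tendsto_term_of_lt {k l : ℕ} (hkl : k < l) :
    Filter.Tendsto (fun n : ℕ =>
      ((k + 1 : ℝ) ^ (k + n - 1) / (Nat.factorial (k + 1) : ℝ)) *
        (∑ m ∈ Finset.range (l - k + 1), (1 / (Nat.factorial m : ℝ)) *
          ∑ f ∈ posTuples m (l - k), ∏ j, Cnki n k (f j)) *
        (Nat.factorial (l + 1) : ℝ) / (l + 1 : ℝ) ^ (l + n - 1)) Filter.atTop (nhds 0) := by
  have hS : SubExp (fun n => ∑ m ∈ Finset.range (l - k + 1), (1 / (Nat.factorial m : ℝ)) *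
      ∑ f ∈ posTuples m (l - k), ∏ j, Cnki n k (f j)) :=
    SubExp.sum _ fun m _ => (SubExp.const _).mul
      (SubExp.sum _ fun f _ => SubExp.prod _ fun j _ => subExp_Cnki k (f j))
  have hl : (0 : ℝ) < l + 1 := by positivity
  have hr : ((k : ℝ) + 1) / (l + 1) < 1 := by
    rw [div_lt_one hl]
    exact_mod_cast Nat.succ_lt_succ hkl
  have h := (hS _ (by positivity) hr).const_mul
    ((k + 1 : ℝ) ^ k / (k + 1) / (Nat.factorial (k + 1) : ℝ) * (Nat.factorial (l + 1) : ℝ) *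
      (l + 1) / (l + 1 : ℝ) ^ l)
  rw [mul_zero] at h
  refine h.congr' ?_
  filter_upwards [Filter.eventually_ge_atTop 1] with n hn
  obtain ⟨n, rfl⟩ := Nat.exists_eq_add_of_le' hn
  have hk : (0 : ℝ) < k + 1 := by positivity
  -- For `n + 1 ≥ 1` the truncated subtraction in the exponents is the true one.
  rw [show k + (n + 1) - 1 = k + n by omega, show l + (n + 1) - 1 = l + n by omega]
  generalize (∑ m ∈ Finset.range (l - k + 1), (1 / (Nat.factorial m : ℝ)) *
      ∑ f ∈ posTuples m (l - k), ∏ j, Cnki (n + 1) k (f j)) = S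
  rw [div_pow, pow_succ, pow_succ, pow_add, pow_add]
  field_simp

/-- For `k = l` only the empty tuple remains, so the inner sum of `a n l` is `1`. -/
theorem inner_sum_self (n l : ℕ) :
    ∑ m ∈ Finset.range (l - l + 1), (1 / (Nat.factorial m : ℝ)) *
      ∑ f ∈ posTuples m (l - l), ∏ j, Cnki n l (f j) = 1 := by
  simp [posTuples]

/-- **Theorem (Aluffi–Chen–Marcolli asymptotic).** For every fixed `l ≥ 0`,
`a(n,l) · (l+1)! / (l+1)^{l+n−1} → 1` as `n → ∞`, i.e.
`a(n,l) ~ (l+1)^{l+n−1}/(l+1)!`. -/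
theorem stmt3 (l : ℕ) :
    Filter.Tendsto
      (fun n : ℕ =>
        a n l * (Nat.factorial (l + 1) : ℝ) / (l + 1 : ℝ) ^ (l + n - 1))
      Filter.atTop (nhds 1) := by
  have h := (tendsto_finsetSum (Finset.range l)
    fun k hk => tendsto_term_of_lt (Finset.mem_range.1 hk)).add_const 1
  simp only [Finset.sum_const_zero, zero_add] at h
  refine h.congr fun n => ?_
  have hl : (0 : ℝ) < l + 1 := by positivity
  have hf : (0 : ℝ) < (Nat.factorial (l + 1) : ℝ) := by positivity
  rw [a, Finset.sum_range_succ, inner_sum_self, add_mul, add_div, Finset.sum_mul, Finset.sum_div]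
  congr 1
  field_simp
end
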